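/- For 0 < b < 1, the principal-value identity (2s²/π) · PV ∫₀^∞ (s')^{−b} / ((s')² − s²) · ds'/s' · s' — i.e. (2s/π) PV ∫₀^∞ [1/((s')² − s²)] · a (s')^{−b} ds' — equals −a tan(πb/2) s^{−b} for every s > 0 and a ∈ ℝ: the singly-subtracted integral dispersion relation applied to the Regge power law Im F₊(s)/s = a s^{−b} yields Re F₊(s)/s = −a tan(πb/2) s^{−b} (with zero subtraction constant and lower limit 0). -/

import Mathlib

/-!
Rescaling `x = s * y` reduces the principal value to `s = 1`. There the substitution `x ↦ 1 / x`
folds the tail `(1 + δ, ∞)` onto `(0, 1 / (1 + δ))` and turns `x ^ (-b) / (x ^ 2 - 1)` into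
`y ^ b / (1 - y ^ 2)`. The two simple poles at `1` then cancel on `(0, 1 - δ)`, and the leftover
strip `(1 - δ, 1 / (1 + δ))` has length `O(δ ^ 2)`, on which the integrand is only `O(1 / δ)`. Hence
the principal value is `-∫₀¹ (y ^ (-b) - y ^ b) / (1 - y ^ 2)`. Expanding `1 / (1 - y ^ 2)` as a
geometric series gives `∑ (1 / (2 * k + 1 - b) - 1 / (2 * k + 1 + b)) = π / 2 * tan (π * b / 2)`,
which is the Mittag-Leffler expansion of the cotangent at `(1 - b) / 2`.
-/

open Filter MeasureTheory Set Topology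
open scoped Pointwise

section TangentSeries

open Complex

lemma hasSum_one_div_add_sub_one_div_add_succ {z : ℂ} (hz : z ∈ integerComplement) :
    HasSum (fun k : ℕ => 1 / (z + k) - 1 / (z + (k + 1))) (1 / z) := by
  have hne (n : ℤ) : z + n ≠ 0 := integerComplement_add_ne_zero hz n
  have summable : Summable fun k : ℕ => 1 / (z + k) - 1 / (z + (k + 1)) := by
    refine ((EisensteinSeries.summable_linear_right_add_one_mul_linear_right z 1 1).comp_injective
      (Nat.cast_injective (R := ℤ))).congr fun k => ?_
    have h₀ : z + k ≠ 0 := mod_cast hne k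
    have h₁ : z + (k + 1) ≠ 0 := mod_cast hne (k + 1)
    simp only [Int.cast_one, one_mul, Function.comp_apply, Int.cast_natCast]
    rw [add_assoc]
    field_simp
    ring
  refine summable.hasSum_iff_tendsto_nat.2 ?_
  have tail : Tendsto (fun n : ℕ => 1 / (z + n)) atTop (𝓝 0) := by
    simp only [one_div]
    exact tendsto_inv₀_cobounded.comp
      (tendsto_const_add_cobounded z |>.comp tendsto_natCast_atTop_cobounded)
  have partial_sum (n : ℕ) :
      ∑ k ∈ Finset.range n, (1 / (z + k) - 1 / (z + (k + 1))) = 1 / z - 1 / (z + n) := by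
    simpa using Finset.sum_range_sub' (fun k : ℕ => 1 / (z + k)) n
  simpa only [partial_sum, sub_zero] using tail.const_sub (1 / z)

lemma hasSum_pi_mul_cot {z : ℂ} (hz : z ∈ integerComplement) :
    HasSum (fun k : ℕ => 1 / (z + k) + 1 / (z - (k + 1))) (Real.pi * cot (Real.pi * z)) := by
  have mittag_leffler : HasSum (fun k : ℕ => 1 / (z - (k + 1)) + 1 / (z + (k + 1)))
      (Real.pi * cot (Real.pi * z) - 1 / z) := by
    rw [cot_series_rep' hz]
    exact (summable_cotTerm hz).hasSum
  convert! mittag_leffler.add (hasSum_one_div_add_sub_one_div_add_succ hz) using 1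
  · ext k
    ring
  · ring

lemma hasSum_pi_div_two_mul_tan {z : ℂ} (hz : cos (Real.pi * z / 2) ≠ 0) :
    HasSum (fun k : ℕ => 1 / (2 * k + 1 - z) - 1 / (2 * k + 1 + z))
      (Real.pi / 2 * tan (Real.pi * z / 2)) := by
  have hw : (1 - z) / 2 ∈ integerComplement := by
    rintro ⟨n, hn⟩
    refine cos_ne_zero_iff.1 hz (-n) ?_
    push_cast
    linear_combination (Real.pi : ℂ) * hn
  have cot_eq_tan : cot (Real.pi * ((1 - z) / 2)) = tan (Real.pi * z / 2) := by
    rw [show (Real.pi : ℂ) * ((1 - z) / 2) = Real.pi / 2 - Real.pi * z / 2 by ring, cot,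
      cos_pi_div_two_sub, sin_pi_div_two_sub, tan]
  convert! (hasSum_pi_mul_cot hw).mul_left (1 / 2) using 1
  · ext k
    rw [show (1 - z) / 2 + k = (2 * k + 1 - z) / 2 by ring,
      show (1 - z) / 2 - (k + 1) = -((2 * k + 1 + z) / 2) by ring]
    simp only [one_div, inv_neg, inv_div]
    ring
  · rw [cot_eq_tan]
    ring

end TangentSeries

section KernelIntegral

lemma intervalIntegrable_rpow_div_one_sub_sq {p c : ℝ} (hp : -1 < p) (hc : |c| < 1) :
    IntervalIntegrable (fun y : ℝ => y ^ p / (1 - y ^ 2)) volume 0 c := by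
  simp only [div_eq_mul_inv]
  refine (intervalIntegral.intervalIntegrable_rpow' hp).mul_continuousOn ?_
  refine ContinuousOn.inv₀ (by fun_prop) fun y hy => ?_
  have hyc : |y| ≤ |c| := by simpa using abs_sub_left_of_mem_uIcc hy
  exact (sub_pos.2 <| (sq_lt_one_iff_abs_lt_one y).2 <| hyc.trans_lt hc).ne'

lemma intervalIntegrable_div_one_sub_sq {f : ℝ → ℝ} {c : ℝ} (hc : -1 < c) (hc₁ : c ≤ 1)
    (hf : ContinuousOn f (Icc c 1)) (hf' : DifferentiableAt ℝ f 1) (hf₁ : f 1 = 0) :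
    IntervalIntegrable (fun y => f y / (1 - y ^ 2)) volume c 1 := by
  have slope_continuousOn : ContinuousOn (dslope f 1) (Icc c 1) := fun y hy => by
    rcases eq_or_ne y 1 with rfl | hy₁
    · exact (continuousAt_dslope_same.2 hf').continuousWithinAt
    · exact (continuousWithinAt_dslope_of_ne hy₁).2 (hf y hy)
  have quotient_continuousOn : ContinuousOn (fun y => -dslope f 1 y / (1 + y)) (uIcc c 1) := by
    rw [uIcc_of_le hc₁]
    exact slope_continuousOn.neg.div (by fun_prop) fun y hy => by linarith [hy.1]
  refine quotient_continuousOn.intervalIntegrable.congr_uIoo fun y hy => ?_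
  rw [uIoo_of_le hc₁] at hy
  simp only [dslope_of_ne f hy.2.ne, slope_def_field, hf₁, sub_zero]
  rw [← div_neg, neg_sub, div_div, show 1 - y ^ 2 = (1 - y) * (1 + y) by ring]

lemma intervalIntegrable_rpow_sub_rpow_div_one_sub_sq {p q : ℝ} (hp : -1 < p) (hq : -1 < q) :
    IntervalIntegrable (fun y : ℝ => (y ^ p - y ^ q) / (1 - y ^ 2)) volume 0 1 := by
  have near_zero :
      IntervalIntegrable (fun y : ℝ => (y ^ p - y ^ q) / (1 - y ^ 2)) volume 0 (1 / 2) := by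
    have half_lt_one : |(1 / 2 : ℝ)| < 1 := by norm_num
    simpa only [sub_div] using! (intervalIntegrable_rpow_div_one_sub_sq hp half_lt_one).sub
      (intervalIntegrable_rpow_div_one_sub_sq hq half_lt_one)
  have near_one :
      IntervalIntegrable (fun y : ℝ => (y ^ p - y ^ q) / (1 - y ^ 2)) volume (1 / 2) 1 := by
    have differentiable {y : ℝ} (hy : y ≠ 0) : DifferentiableAt ℝ (fun y => y ^ p - y ^ q) y :=
      (Real.differentiableAt_rpow_const_of_ne p hy).sub
        (Real.differentiableAt_rpow_const_of_ne q hy)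
    refine intervalIntegrable_div_one_sub_sq (by norm_num) (by norm_num) (fun y hy => ?_)
      (differentiable one_ne_zero) (by simp)
    exact (differentiable (by linarith [hy.1])).continuousAt.continuousWithinAt
  exact near_zero.trans near_one

lemma integral_rpow_sub_rpow_mul_sq_pow {p q : ℝ} (hp : -1 < p) (hq : -1 < q) (k : ℕ) :
    ∫ y in (0 : ℝ)..1, (y ^ p - y ^ q) * (y ^ 2) ^ k =
      1 / (2 * k + 1 + p) - 1 / (2 * k + 1 + q) := by
  have : (0 : ℝ) ≤ 2 * k := by positivity
  have integral_eq {r : ℝ} (hr : -1 < r) :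
      ∫ y in (0 : ℝ)..1, y ^ (r + 2 * k) = 1 / (2 * k + 1 + r) := by
    rw [integral_rpow (.inl (by linarith)), Real.one_rpow, Real.zero_rpow (by linarith), sub_zero]
    ring_nf
  rw [← integral_eq hp, ← integral_eq hq, ← intervalIntegral.integral_sub
    (intervalIntegral.intervalIntegrable_rpow' (by linarith))
    (intervalIntegral.intervalIntegrable_rpow' (by linarith))]
  refine intervalIntegral.integral_congr_uIoo fun y hy => ?_
  rw [uIoo_of_le zero_le_one] at hy
  have hpow : y ^ (2 * k : ℝ) = (y ^ 2) ^ k := by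
    rw [← pow_mul]
    exact_mod_cast Real.rpow_natCast y (2 * k)
  simp only [Real.rpow_add hy.1, hpow]
  ring

lemma hasSum_integral_rpow_sub_rpow_div_one_sub_sq {p q : ℝ} (hp : -1 < p) (hq : -1 < q) :
    HasSum (fun k : ℕ => 1 / (2 * k + 1 + p) - 1 / (2 * k + 1 + q))
      (∫ y in (0 : ℝ)..1, (y ^ p - y ^ q) / (1 - y ^ 2)) := by
  have geometric {y : ℝ} (hy : y ∈ Ioo 0 1) (c : ℝ) :
      HasSum (fun k : ℕ => c * (y ^ 2) ^ k) (c / (1 - y ^ 2)) :=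
    (hasSum_geometric_of_lt_one (sq_nonneg y) (by nlinarith [hy.1, hy.2])).mul_left c
  have integrable : IntegrableOn (fun y : ℝ => |y ^ p - y ^ q| / (1 - y ^ 2)) (Ioo 0 1) := by
    have kernel := intervalIntegrable_rpow_sub_rpow_div_one_sub_sq hp hq
    rw [intervalIntegrable_iff_integrableOn_Ioo_of_le zero_le_one] at kernel
    refine IntegrableOn.congr_fun kernel.norm (fun y hy => ?_) measurableSet_Ioo
    have hy_sq : 0 < 1 - y ^ 2 := by nlinarith [hy.1, hy.2]
    rw [norm_div, Real.norm_eq_abs, Real.norm_of_nonneg hy_sq.le]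
  simp only [← integral_rpow_sub_rpow_mul_sq_pow hp hq,
    intervalIntegral.integral_of_le zero_le_one, integral_Ioc_eq_integral_Ioo]
  refine hasSum_integral_of_dominated_convergence
    (fun k y => |y ^ p - y ^ q| * (y ^ 2) ^ k) (fun k => ?_) (fun k => ?_) ?_ ?_ ?_
  · exact Measurable.aestronglyMeasurable (by fun_prop)
  · exact .of_forall fun y => by simp
  · filter_upwards [ae_restrict_mem measurableSet_Ioo] with y hy using (geometric hy _).summable
  · exact integrable.congr_fun (fun y hy => (geometric hy _).tsum_eq.symm) measurableSet_Ioo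
  · filter_upwards [ae_restrict_mem measurableSet_Ioo] with y hy using geometric hy _

lemma integral_rpow_neg_sub_rpow_div_one_sub_sq {b : ℝ} (hb : |b| < 1) :
    ∫ y in (0 : ℝ)..1, (y ^ (-b) - y ^ b) / (1 - y ^ 2) =
      Real.pi / 2 * Real.tan (Real.pi * b / 2) := by
  obtain ⟨hb_lower, hb_upper⟩ := abs_lt.1 hb
  have cos_ne_zero : Real.cos (Real.pi * b / 2) ≠ 0 :=
    (Real.cos_pos_of_mem_Ioo ⟨by nlinarith [Real.pi_pos], by nlinarith [Real.pi_pos]⟩).ne'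
  have tangent_series := hasSum_pi_div_two_mul_tan (z := b) (by exact_mod_cast cos_ne_zero)
  have integral_series := hasSum_integral_rpow_sub_rpow_div_one_sub_sq (p := -b) (q := b)
    (by linarith) hb_lower
  simp only [← sub_eq_add_neg] at integral_series
  exact integral_series.unique (by exact_mod_cast tangent_series)

end KernelIntegral

section PrincipalValue

variable {E : Type*} [NormedAddCommGroup E] [NormedSpace ℝ E]

/-- The Cauchy principal value of `f` over `(0, ∞)` at the singular point `s` is `v`, with a cut-off
symmetric around `s`. Integrability of `f` off the cut-off is not part of the notion: a truncated
Bochner integral that does not exist contributes `0`. -/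
def HasPrincipalValue (f : ℝ → E) (s : ℝ) (v : E) : Prop :=
  Tendsto (fun ε : ℝ => (∫ x in Ioo 0 (s - ε), f x) + ∫ x in Ioi (s + ε), f x) (𝓝[>] 0) (𝓝 v)

lemma HasPrincipalValue.const_smul {f : ℝ → E} {s : ℝ} {v : E} (hf : HasPrincipalValue f s v)
    (c : ℝ) : HasPrincipalValue (fun x => c • f x) s (c • v) := by
  simpa only [HasPrincipalValue, integral_smul, ← smul_add] using Tendsto.const_smul hf c

lemma HasPrincipalValue.congr {f g : ℝ → E} {s : ℝ} {v : E} (hs : 0 ≤ s)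
    (hf : HasPrincipalValue f s v) (hfg : EqOn f g (Ioi 0)) : HasPrincipalValue g s v := by
  refine Tendsto.congr' ?_ hf
  filter_upwards [self_mem_nhdsWithin] with ε (hε : 0 < ε)
  have cutoff_pos : 0 < s + ε := add_pos_of_nonneg_of_pos hs hε
  rw [setIntegral_congr_fun measurableSet_Ioo fun x hx => hfg hx.1,
    setIntegral_congr_fun measurableSet_Ioi fun x hx => hfg (cutoff_pos.trans hx)]

lemma HasPrincipalValue.comp_inv_mul {f : ℝ → E} {c s : ℝ} {v : E} (hc : 0 < c)
    (hf : HasPrincipalValue f s v) :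
    HasPrincipalValue (fun x => f (c⁻¹ * x)) (c * s) (c • v) := by
  have hc' : 0 < c⁻¹ := inv_pos.2 hc
  have setIntegral_comp (A : Set ℝ) :
      ∫ x in A, f (c⁻¹ * x) = c • ∫ x in c⁻¹ • A, f x := by
    simpa using Measure.setIntegral_comp_smul_of_pos volume f A hc'
  have width_tendsto : Tendsto (fun ε : ℝ => c⁻¹ * ε) (𝓝[>] 0) (𝓝[>] 0) :=
    tendsto_iff_comap.2 (comap_mulLeft_nhdsGT_zero hc').ge
  simp only [HasPrincipalValue, setIntegral_comp, LinearOrderedField.smul_Ioo hc',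
    LinearOrderedField.smul_Ioi hc', mul_zero, mul_sub, mul_add, inv_mul_cancel_left₀ hc.ne',
    ← smul_add]
  exact (hf.comp width_tendsto).const_smul c

lemma integral_Ioi_eq_integral_Ioo_inv (f : ℝ → E) {c : ℝ} (hc : 0 < c) :
    ∫ x in Ioi c, f x = ∫ y in Ioo 0 c⁻¹, (y ^ 2)⁻¹ • f y⁻¹ := by
  have change := integral_image_eq_integral_abs_deriv_smul (f := Inv.inv) measurableSet_Ioo
    (fun y (hy : y ∈ Ioo 0 c⁻¹) => (hasDerivAt_inv hy.1.ne').hasDerivWithinAt)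
    inv_injective.injOn f
  simpa only [image_inv_eq_inv, inv_Ioo_0_left (inv_pos.2 hc), inv_inv, abs_neg, abs_inv, abs_sq]
    using change

lemma norm_integral_one_sub_inv_one_add_le {g : ℝ → E} {C δ : ℝ} (hδ : 0 < δ)
    (hg : ∀ y ∈ Ioc (1 - δ) (1 + δ)⁻¹, ‖g y‖ ≤ C * (1 - y)⁻¹) (hC : 0 ≤ C) :
    ‖∫ y in (1 - δ)..(1 + δ)⁻¹, g y‖ ≤ C * δ := by
  have left_le_right : 1 - δ ≤ (1 + δ)⁻¹ := by
    rw [← one_div, le_div_iff₀ (by positivity)]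
    nlinarith
  have one_sub_right : 1 - (1 + δ)⁻¹ = δ / (1 + δ) := by
    field_simp
    ring
  have g_le : ∀ y ∈ uIoc (1 - δ) (1 + δ)⁻¹, ‖g y‖ ≤ C * (δ / (1 + δ))⁻¹ := fun y hy => by
    rw [uIoc_of_le left_le_right] at hy
    refine (hg y hy).trans ?_
    rw [← one_sub_right]
    gcongr
    · rw [one_sub_right]
      positivity
    · exact hy.2
  calc ‖∫ y in (1 - δ)..(1 + δ)⁻¹, g y‖
      ≤ C * (δ / (1 + δ))⁻¹ * |(1 + δ)⁻¹ - (1 - δ)| :=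
        intervalIntegral.norm_integral_le_of_norm_le_const g_le
    _ = C * δ := by
        rw [abs_of_nonneg (sub_nonneg.2 left_le_right)]
        field_simp
        ring

lemma tendsto_integral_one_sub_inv_one_add {g : ℝ → E}
    (hg : g =O[𝓝[<] 1] fun y => (1 - y)⁻¹) :
    Tendsto (fun δ : ℝ => ∫ y in (1 - δ)..(1 + δ)⁻¹, g y) (𝓝[>] 0) (𝓝 0) := by
  obtain ⟨C, hC, g_bound⟩ := hg.exists_nonneg
  obtain ⟨r, hr, g_bound_Ioo⟩ := mem_nhdsLT_iff_exists_Ioo_subset.1 g_bound.bound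
  have norm_le : ∀ᶠ δ in 𝓝[>] (0 : ℝ), ‖∫ y in (1 - δ)..(1 + δ)⁻¹, g y‖ ≤ C * δ := by
    filter_upwards [Ioo_mem_nhdsGT (sub_pos.2 hr)] with δ ⟨hδ, hδr⟩
    refine norm_integral_one_sub_inv_one_add_le hδ (fun y hy => ?_) hC
    have hy₁ : y < 1 := hy.2.trans_lt (inv_lt_one_of_one_lt₀ (by linarith))
    simpa [abs_of_pos (sub_pos.2 hy₁)] using g_bound_Ioo ⟨by linarith [hy.1], hy₁⟩
  have bound_tendsto : Tendsto (fun δ => C * δ) (𝓝[>] 0) (𝓝 0) :=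
    tendsto_nhdsWithin_of_tendsto_nhds (Continuous.tendsto' (by fun_prop) _ _ (mul_zero C))
  exact squeeze_zero_norm' norm_le bound_tendsto

lemma tendsto_integral_sub_right {h : ℝ → E} {a b : ℝ} (hab : a < b)
    (hh : IntervalIntegrable h volume a b) :
    Tendsto (fun δ : ℝ => ∫ y in a..(b - δ), h y) (𝓝[>] 0) (𝓝 (∫ y in a..b, h y)) := by
  have primitive_continuousWithinAt :=
    intervalIntegral.continuousOn_primitive_interval' hh left_mem_uIcc b right_mem_uIcc
  refine primitive_continuousWithinAt.tendsto.comp (tendsto_nhdsWithin_iff.2 ⟨?_, ?_⟩)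
  · exact tendsto_nhdsWithin_of_tendsto_nhds
      (Continuous.tendsto' (by fun_prop) _ _ (sub_zero b))
  · filter_upwards [Ioo_mem_nhdsGT (sub_pos.2 hab)] with δ hδ
    rw [uIcc_of_le hab.le]
    exact ⟨by linarith [hδ.2], by linarith [hδ.1]⟩

lemma hasPrincipalValue_one_of_reflection {f g : ℝ → E}
    (hg : ∀ y ∈ Ioo 0 1, (y ^ 2)⁻¹ • f y⁻¹ = g y)
    (hf_int : ∀ c ∈ Ioo 0 1, IntervalIntegrable f volume 0 c)
    (hg_int : ∀ c ∈ Ioo 0 1, IntervalIntegrable g volume 0 c)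
    (hg_pole : g =O[𝓝[<] 1] fun y => (1 - y)⁻¹)
    (hfg_int : IntervalIntegrable (fun y => f y + g y) volume 0 1) :
    HasPrincipalValue f 1 (∫ y in (0 : ℝ)..1, (f y + g y)) := by
  have folded {δ : ℝ} (hδ : δ ∈ Ioo 0 1) :
      (∫ y in (0 : ℝ)..(1 - δ), (f y + g y)) + ∫ y in (1 - δ)..(1 + δ)⁻¹, g y =
        (∫ x in Ioo 0 (1 - δ), f x) + ∫ x in Ioi (1 + δ), f x := by
    obtain ⟨hδ₀, hδ₁⟩ := hδ
    have inv_lt_one : (1 + δ)⁻¹ < 1 := inv_lt_one_of_one_lt₀ (by linarith)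
    have inv_pos : 0 < (1 + δ)⁻¹ := by positivity
    have left_mem : 1 - δ ∈ Ioo (0 : ℝ) 1 := ⟨by linarith, by linarith⟩
    have g_left := hg_int _ left_mem
    have g_right := hg_int _ ⟨inv_pos, inv_lt_one⟩
    rw [integral_Ioi_eq_integral_Ioo_inv f (by linarith),
      setIntegral_congr_fun measurableSet_Ioo fun y hy => hg y ⟨hy.1, hy.2.trans inv_lt_one⟩,
      ← integral_Ioc_eq_integral_Ioo, ← integral_Ioc_eq_integral_Ioo,
      ← intervalIntegral.integral_of_le left_mem.1.le, ← intervalIntegral.integral_of_le inv_pos.le,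
      intervalIntegral.integral_add (hf_int _ left_mem) g_left, add_assoc,
      intervalIntegral.integral_add_adjacent_intervals g_left (g_left.symm.trans g_right)]
  rw [← add_zero (∫ y in (0 : ℝ)..1, (f y + g y))]
  refine ((tendsto_integral_sub_right one_pos hfg_int).add
    (tendsto_integral_one_sub_inv_one_add hg_pole)).congr' ?_
  filter_upwards [Ioo_mem_nhdsGT one_pos] with δ hδ using folded hδ

end PrincipalValue

lemma isBigO_rpow_div_one_sub_sq (b : ℝ) :
    (fun y : ℝ => y ^ b / (1 - y ^ 2)) =O[𝓝[<] 1] fun y => (1 - y)⁻¹ := by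
  have factor_continuousAt : ContinuousAt (fun y : ℝ => y ^ b / (1 + y)) 1 :=
    (Real.continuousAt_rpow_const _ _ (.inl one_ne_zero)).div (by fun_prop) (by norm_num)
  have factor_bounded := (factor_continuousAt.tendsto.isBigO_one ℝ).mono
    (nhdsWithin_le_nhds (s := Iio 1))
  refine (factor_bounded.mul (Asymptotics.isBigO_refl (fun y => (1 - y)⁻¹) _)).congr
    (fun y => ?_) fun y => one_mul _
  rw [← div_eq_mul_inv, div_div]
  ring_nf

lemma hasPrincipalValue_rpow_neg_div_sq_sub_one {b : ℝ} (hb : |b| < 1) :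
    HasPrincipalValue (fun x : ℝ => x ^ (-b) / (x ^ 2 - 1)) 1
      (-(Real.pi / 2 * Real.tan (Real.pi * b / 2))) := by
  obtain ⟨hb_lower, hb_upper⟩ := abs_lt.1 hb
  have abs_lt_one {c : ℝ} (hc : c ∈ Ioo 0 1) : |c| < 1 := abs_lt.2 ⟨by linarith [hc.1], hc.2⟩
  have f_eq (y : ℝ) : y ^ (-b) / (y ^ 2 - 1) = -(y ^ (-b) / (1 - y ^ 2)) := by
    rw [← div_neg, neg_sub]
  have reflection : ∀ y ∈ Ioo (0 : ℝ) 1,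
      (y ^ 2)⁻¹ • (y⁻¹ ^ (-b) / (y⁻¹ ^ 2 - 1)) = y ^ b / (1 - y ^ 2) := fun y hy => by
    have hy₀ : y ≠ 0 := hy.1.ne'
    rw [Real.inv_rpow hy.1.le, Real.rpow_neg hy.1.le, inv_inv, smul_eq_mul, inv_mul_eq_div,
      div_div, sub_mul, ← mul_pow, inv_mul_cancel₀ hy₀, one_pow, one_mul]
  have sum_eq (y : ℝ) : y ^ (-b) / (y ^ 2 - 1) + y ^ b / (1 - y ^ 2) =
      -((y ^ (-b) - y ^ b) / (1 - y ^ 2)) := by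
    rw [f_eq]
    ring
  have kernel_int := (intervalIntegrable_rpow_sub_rpow_div_one_sub_sq (p := -b) (q := b)
    (by linarith) hb_lower).neg
  rw [← integral_rpow_neg_sub_rpow_div_one_sub_sq hb, ← intervalIntegral.integral_neg]
  simp only [← sum_eq]
  refine hasPrincipalValue_one_of_reflection reflection (fun c hc => ?_)
    (fun c hc => intervalIntegrable_rpow_div_one_sub_sq hb_lower (abs_lt_one hc))
    (isBigO_rpow_div_one_sub_sq b) ?_
  · simpa only [f_eq] using!
      (intervalIntegrable_rpow_div_one_sub_sq (by linarith) (abs_lt_one hc)).neg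
  · simpa only [sum_eq] using! kernel_int

lemma hasPrincipalValue_rpow_neg_div_sq_sub_sq {b s : ℝ} (hs : 0 < s) (hb : |b| < 1) :
    HasPrincipalValue (fun x : ℝ => x ^ (-b) / (x ^ 2 - s ^ 2)) s
      (-(Real.pi / (2 * s) * Real.tan (Real.pi * b / 2) * s ^ (-b))) := by
  have scaled := ((hasPrincipalValue_rpow_neg_div_sq_sub_one hb).comp_inv_mul hs).const_smul
    (s ^ (-b) / s ^ 2)
  rw [mul_one] at scaled
  convert! scaled.congr hs.le fun x (hx : 0 < x) => ?_ using 1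
  · simp only [smul_eq_mul]
    field_simp
  · have hsb : s ^ (-b) ≠ 0 := (Real.rpow_pos_of_pos hs _).ne'
    have denominator_eq : (s⁻¹ * x) ^ 2 - 1 = (x ^ 2 - s ^ 2) / s ^ 2 := by field_simp
    rw [Real.mul_rpow (inv_nonneg.2 hs.le) hx.le, Real.inv_rpow hs.le, denominator_eq, smul_eq_mul]
    field_simp

theorem pv_dispersion_power_law_general (s a b : ℝ) (hs : 0 < s) (hb : |b| < 1) :
    Filter.Tendsto (fun ε : ℝ =>
      (2 * s / Real.pi) *
        ((∫ x in Set.Ioo (0:ℝ) (s - ε), a * x ^ (-b) / (x ^ 2 - s ^ 2)) +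
         (∫ x in Set.Ioi (s + ε), a * x ^ (-b) / (x ^ 2 - s ^ 2))))
      (nhdsWithin 0 (Set.Ioi 0))
      (nhds (-a * Real.tan (Real.pi * b / 2) * s ^ (-b))) := by
  have regge_pv := (hasPrincipalValue_rpow_neg_div_sq_sub_sq hs hb).const_smul a
  simp only [smul_eq_mul, ← mul_div_assoc] at regge_pv
  convert! regge_pv.const_mul (2 * s / Real.pi) using 2
  field_simp

theorem pv_dispersion_power_law (s a b : ℝ) (hs : 0 < s) (hb0 : 0 < b) (hb1 : b < 1) :
    Filter.Tendsto (fun ε : ℝ =>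
      (2 * s / Real.pi) *
        ((∫ x in Set.Ioo (0:ℝ) (s - ε), a * x ^ (-b) / (x ^ 2 - s ^ 2)) +
         (∫ x in Set.Ioi (s + ε), a * x ^ (-b) / (x ^ 2 - s ^ 2))))
      (nhdsWithin 0 (Set.Ioi 0))
      (nhds (-a * Real.tan (Real.pi * b / 2) * s ^ (-b))) :=
  pv_dispersion_power_law_general s a b hs (abs_lt.2 ⟨by linarith, hb1⟩)
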